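/- arXiv:1206.5124 — 7 statements merged into one kernel-verified Lean document; each statement's English description precedes it below -/
import Mathlib

section
/- Let C be an [n,k] linear code over F_q with generator matrix rows w_1,...,w_k. Then the binomial ideal associated to the code equals the ideal generated by the row binomials and the additive-table relations; that is, I(C) = I_2, where I(C) = ⟨x^u − x^v : u,v ∈ ℕ^{n(q−1)}, ∇(u − v) ∈ C⟩ and I_2 = ⟨{x^{▲(α^j w_i)} − 1 : 1 ≤ i ≤ k, 1 ≤ j ≤ q−1} ∪ ⋃_{i=1}^n R(T_+^{(i)})⟩, both ideals of F_2[x_{ij} : 1 ≤ i ≤ n, 1 ≤ j ≤ q−1]. -/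
open MvPolynomial Finset

/-- The set of binomials `R(T₊⁽ⁱ⁾)` (over all blocks `i = 1,…,n`) encoding the additive
table of the finite field `F` with primitive element `α`: for indices `u v w ∈ {1,…,q-1}`,
`x_{iu} x_{iv} - x_{iw}` whenever `α^u + α^v = α^w`, and `x_{iu} x_{iv} - 1` whenever
`α^u + α^v = 0`.  (The variable `x_{ij}` is indexed by `(i, j)` with `j : Fin (q-1)`
representing the exponent `j+1 ∈ {1,…,q-1}`.) -/
def addRel (F : Type) [Field F] [Fintype F] (n : ℕ) (α : F) :
    Set (MvPolynomial (Fin n × Fin (Fintype.card F - 1)) (ZMod 2)) :=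
  {p | ∃ (i : Fin n) (u v w : Fin (Fintype.card F - 1)),
      α ^ (u.1 + 1) + α ^ (v.1 + 1) = α ^ (w.1 + 1) ∧
      p = X (i, u) * X (i, v) - X (i, w)} ∪
  {p | ∃ (i : Fin n) (u v : Fin (Fintype.card F - 1)),
      α ^ (u.1 + 1) + α ^ (v.1 + 1) = 0 ∧
      p = X (i, u) * X (i, v) - 1}

/-- The squarefree monomial `x^{▲a}` attached to a vector `a ∈ F^n`:
`x^{▲a} = ∏_{i : aᵢ ≠ 0} x_{i jᵢ}` where `aᵢ = α^{jᵢ}`; the discrete logarithm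
(base `α`) is supplied as a function `L` on the nonzero elements of `F`. -/
noncomputable def xup (F : Type) [Field F] [Fintype F] [DecidableEq F] (n : ℕ)
    (L : {x : F // x ≠ 0} → Fin (Fintype.card F - 1)) (a : Fin n → F) :
    MvPolynomial (Fin n × Fin (Fintype.card F - 1)) (ZMod 2) :=
  ∏ i : Fin n, if h : a i ≠ 0 then X (i, L ⟨a i, h⟩) else 1

/-- The binomial ideal `I(C)` associated to a linear code `C ⊆ F^n`:
it is generated by all binomials `x^u - x^v` with `u, v ∈ ℕ^{n(q-1)}` such that
`∇(u - v) ∈ C`, where `∇` maps an exponent vector `(c_{ij})` to the vector of `F^n`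
whose `i`-th coordinate is `∑_j c_{ij} α^j`. -/
noncomputable def codeIdeal (F : Type) [Field F] [Fintype F] (n : ℕ) (α : F)
    (C : Submodule F (Fin n → F)) :
    Ideal (MvPolynomial (Fin n × Fin (Fintype.card F - 1)) (ZMod 2)) :=
  Ideal.span {p | ∃ u v : Fin n × Fin (Fintype.card F - 1) → ℕ,
    (fun i => (∑ j, u (i, j) • α ^ (j.1 + 1)) - ∑ j, v (i, j) • α ^ (j.1 + 1)) ∈ C ∧
    p = (∏ s, X s ^ u s) - ∏ s, X s ^ v s}

/-- The ideal `I₂` generated by the row binomials `x^{▲(αʲ wᵢ)} - 1`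
(for the rows `w₁, …, w_k` of a generator matrix and `j = 1, …, q-1`)
together with the additive-table relations `⋃ᵢ R(T₊⁽ⁱ⁾)`. -/
noncomputable def rowIdeal (F : Type) [Field F] [Fintype F] [DecidableEq F] (n k : ℕ) (α : F)
    (L : {x : F // x ≠ 0} → Fin (Fintype.card F - 1)) (w : Fin k → Fin n → F) :
    Ideal (MvPolynomial (Fin n × Fin (Fintype.card F - 1)) (ZMod 2)) :=
  Ideal.span ({p | ∃ (i : Fin k) (j : Fin (Fintype.card F - 1)),
      p = xup F n L (α ^ (j.1 + 1) • w i) - 1} ∪ addRel F n α)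

section aux
variable {F : Type} [Field F] [Fintype F] [DecidableEq F] {n k : ℕ} {α : F}
  {L : {x : F // x ≠ 0} → Fin (Fintype.card F - 1)}

theorem aux_ne (hL : ∀ x : {x : F // x ≠ 0}, α ^ ((L x).1 + 1) = x.1) : α ≠ 0 := by
  rintro rfl
  have := hL ⟨1, one_ne_zero⟩
  simp at this

theorem aux_L (hL : ∀ x : {x : F // x ≠ 0}, α ^ ((L x).1 + 1) = x.1)
    (j : Fin (Fintype.card F - 1)) (h : α ^ (j.1 + 1) ≠ 0) : L ⟨α ^ (j.1 + 1), h⟩ = j := by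
  have hinj : Function.Injective L := by
    intro x y hxy
    apply Subtype.ext
    rw [← hL x, ← hL y, hxy]
  have hcard : Fintype.card {x : F // x ≠ 0} = Fintype.card (Fin (Fintype.card F - 1)) := by
    rw [Fintype.card_fin]
    simp [Fintype.card_subtype_compl]
  have hb := (Fintype.bijective_iff_injective_and_card L).2 ⟨hinj, hcard⟩
  obtain ⟨x, rfl⟩ := hb.2 j
  congr 1
  exact Subtype.ext (hL x)

/-- one factor of `xup` -/
noncomputable def auxY (n : ℕ) (L : {x : F // x ≠ 0} → Fin (Fintype.card F - 1)) (i : Fin n) (a : F) :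
    MvPolynomial (Fin n × Fin (Fintype.card F - 1)) (ZMod 2) :=
  if h : a ≠ 0 then X (i, L ⟨a, h⟩) else 1

theorem auxY_add (hL : ∀ x : {x : F // x ≠ 0}, α ^ ((L x).1 + 1) = x.1) (w : Fin k → Fin n → F)
    (i : Fin n) (a b : F) :
    Ideal.Quotient.mk (rowIdeal F n k α L w) (auxY n L i (a + b)) =
    Ideal.Quotient.mk (rowIdeal F n k α L w) (auxY n L i a) *
    Ideal.Quotient.mk (rowIdeal F n k α L w) (auxY n L i b) := by
  by_cases ha : a = 0
  · simp [auxY, ha]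
  by_cases hb : b = 0
  · simp [auxY, hb]
  rw [← map_mul, eq_comm, Ideal.Quotient.eq]
  apply Ideal.subset_span
  right
  by_cases hab : a + b = 0
  · right
    refine ⟨i, L ⟨a, ha⟩, L ⟨b, hb⟩, ?_, ?_⟩
    · rw [hL, hL, hab]
    · simp [auxY, ha, hb, hab]
  · left
    refine ⟨i, L ⟨a, ha⟩, L ⟨b, hb⟩, L ⟨a + b, hab⟩, ?_, ?_⟩
    · rw [hL, hL, hL]
    · simp [auxY, ha, hb, hab]

theorem xup_eq (a : Fin n → F) : xup F n L a = ∏ i, auxY n L i (a i) := rfl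

theorem xup_add (hL : ∀ x : {x : F // x ≠ 0}, α ^ ((L x).1 + 1) = x.1) (w : Fin k → Fin n → F)
    (a b : Fin n → F) :
    Ideal.Quotient.mk (rowIdeal F n k α L w) (xup F n L (a + b)) =
    Ideal.Quotient.mk (rowIdeal F n k α L w) (xup F n L a) *
    Ideal.Quotient.mk (rowIdeal F n k α L w) (xup F n L b) := by
  simp only [xup_eq, map_prod, Pi.add_apply, auxY_add hL, Finset.prod_mul_distrib]

theorem xup_zero : xup F n L 0 = 1 := by simp [xup]

theorem xup_span (hL : ∀ x : {x : F // x ≠ 0}, α ^ ((L x).1 + 1) = x.1) (w : Fin k → Fin n → F)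
    (a : Fin n → F) (ha : a ∈ Submodule.span F (Set.range w)) :
    ∀ c : F, Ideal.Quotient.mk (rowIdeal F n k α L w) (xup F n L (c • a)) = 1 := by
  induction ha using Submodule.span_induction with
  | mem x hx =>
    obtain ⟨i, rfl⟩ := hx
    intro c
    by_cases hc : c = 0
    · simp [hc, xup_zero]
    rw [← map_one (Ideal.Quotient.mk (rowIdeal F n k α L w)), Ideal.Quotient.eq]
    apply Ideal.subset_span
    left
    exact ⟨i, L ⟨c, hc⟩, by rw [hL]⟩
  | zero => intro c; simp [xup_zero]
  | add x y _ _ hx hy => intro c; rw [smul_add, xup_add hL, hx, hy, one_mul]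
  | smul b x _ hx => intro c; rw [smul_smul]; exact hx _

theorem auxY_nsmul_sum (hL : ∀ x : {x : F // x ≠ 0}, α ^ ((L x).1 + 1) = x.1)
    (w : Fin k → Fin n → F) (i : Fin n) (u : Fin (Fintype.card F - 1) → ℕ) :
    Ideal.Quotient.mk (rowIdeal F n k α L w) (auxY n L i (∑ j, u j • α ^ (j.1 + 1))) =
    ∏ j, Ideal.Quotient.mk (rowIdeal F n k α L w) (X (i, j)) ^ u j := by
  have h0 : Ideal.Quotient.mk (rowIdeal F n k α L w) (auxY n L i 0) = 1 := by simp [auxY]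
  let f : Multiplicative F →* (MvPolynomial (Fin n × Fin (Fintype.card F - 1)) (ZMod 2) ⧸
      rowIdeal F n k α L w) :=
    { toFun := fun a => Ideal.Quotient.mk (rowIdeal F n k α L w) (auxY n L i a.toAdd)
      map_one' := h0
      map_mul' := fun a b => auxY_add hL w i _ _ }
  have := map_prod f (fun j : Fin (Fintype.card F - 1) =>
    (Multiplicative.ofAdd (α ^ (j.1 + 1))) ^ u j) Finset.univ
  simp only [map_pow] at this
  have h2 : ∀ j : Fin (Fintype.card F - 1), f (Multiplicative.ofAdd (α ^ (j.1 + 1))) =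
      Ideal.Quotient.mk (rowIdeal F n k α L w) (X (i, j)) := by
    intro j
    have hj : α ^ (j.1 + 1) ≠ 0 := pow_ne_zero _ (aux_ne hL)
    change Ideal.Quotient.mk (rowIdeal F n k α L w) (auxY n L i (α ^ (j.1 + 1))) = _
    rw [auxY, dif_pos hj, aux_L hL]
  simp only [h2] at this
  rw [← this]
  rfl

theorem mk_mon (hL : ∀ x : {x : F // x ≠ 0}, α ^ ((L x).1 + 1) = x.1)
    (w : Fin k → Fin n → F) (u : Fin n × Fin (Fintype.card F - 1) → ℕ) :
    Ideal.Quotient.mk (rowIdeal F n k α L w) (∏ s, X s ^ u s) =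
    Ideal.Quotient.mk (rowIdeal F n k α L w)
      (xup F n L (fun i => ∑ j, u (i, j) • α ^ (j.1 + 1))) := by
  rw [xup_eq, map_prod, map_prod, Fintype.prod_prod_type]
  refine Finset.prod_congr rfl fun i _ => ?_
  rw [auxY_nsmul_sum hL w i (fun j => u (i, j))]
  simp

end aux

/-- Let `C` be an `[n,k]` linear code over `F = F_q` with generator matrix
rows `w₁, …, w_k`, where `α` is a primitive element of `F` (every nonzero element of `F`
is `α^{j}` for a `j ∈ {1,…,q-1}`, and `L` is the discrete logarithm).  Then the binomial
ideal associated to the code equals the ideal generated by the row binomials and the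
additive-table relations: `I(C) = I₂`. -/
theorem code_ideal_eq_row_ideal
    (F : Type) [Field F] [Fintype F] [DecidableEq F] (n k : ℕ) (hn : 0 < n) (α : F)
    (L : {x : F // x ≠ 0} → Fin (Fintype.card F - 1))
    (hL : ∀ x : {x : F // x ≠ 0}, α ^ ((L x).1 + 1) = x.1)
    (C : Submodule F (Fin n → F)) (w : Fin k → Fin n → F)
    (hw : Submodule.span F (Set.range w) = C)
    (hdim : Module.finrank F C = k) :
    codeIdeal F n α C = rowIdeal F n k α L w := by
  apply le_antisymm
  · refine Ideal.span_le.2 ?_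
    rintro p ⟨u, v, h, rfl⟩
    rw [SetLike.mem_coe, ← Ideal.Quotient.eq, mk_mon hL, mk_mon hL]
    rw [← hw] at h
    have h1 := xup_span hL w _ h 1
    rw [one_smul] at h1
    rw [← mul_one (Ideal.Quotient.mk _ (xup F n L fun i => ∑ j, v (i, j) • α ^ (j.1 + 1))),
      ← h1, ← xup_add hL]
    congr 2
    funext i
    simp
  · refine Ideal.span_le.2 ?_
    rintro p (⟨i, j, rfl⟩ | ⟨i, a, b, c, h, rfl⟩ | ⟨i, a, b, h, rfl⟩)
    · generalize ha : α ^ (j.1 + 1) • w i = a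
      have haC : a ∈ C := by
        rw [← ha, ← hw]
        exact Submodule.smul_mem _ _ (Submodule.subset_span ⟨i, rfl⟩)
      apply Ideal.subset_span
      refine ⟨fun s => if h : a s.1 ≠ 0 then (if s.2 = L ⟨a s.1, h⟩ then 1 else 0) else 0, 0, ?_, ?_⟩
      · convert haC using 1
        funext i
        by_cases h : a i = 0
        · simp [h]
        · have e := hL ⟨a i, h⟩
          simp only [ne_eq, h, not_false_eq_true, dite_true, Pi.zero_apply, zero_smul,
            Finset.sum_const_zero, sub_zero]
          rw [Finset.sum_eq_single (L ⟨a i, h⟩)]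
          · simp [e]
          · intro b _ hb; simp [hb]
          · simp
      · simp only [Pi.zero_apply, pow_zero, Finset.prod_const_one]
        congr 1
        rw [xup, Fintype.prod_prod_type]
        refine Finset.prod_congr rfl fun i _ => ?_
        by_cases h : a i = 0
        · simp [h]
        · rw [Finset.prod_eq_single (L ⟨a i, h⟩)]
          · simp [h]
          · intro b _ hb; simp [hb]
          · simp
    · apply Ideal.subset_span
      refine ⟨Pi.single (i, a) 1 + Pi.single (i, b) 1, Pi.single (i, c) 1, ?_, ?_⟩
      · convert C.zero_mem using 1
        funext i'
        by_cases hi : i' = i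
        · subst hi
          simp [Pi.single_apply, add_mul, Finset.sum_add_distrib, h]
        · simp [Pi.single_apply, hi]
      · simp only [Pi.add_apply, pow_add, Finset.prod_mul_distrib]
        simp [Pi.single_apply, pow_ite]
    · apply Ideal.subset_span
      refine ⟨Pi.single (i, a) 1 + Pi.single (i, b) 1, 0, ?_, ?_⟩
      · convert C.zero_mem using 1
        funext i'
        by_cases hi : i' = i
        · subst hi
          simp [Pi.single_apply, add_mul, Finset.sum_add_distrib, h]
        · simp [Pi.single_apply, hi]
      · simp only [Pi.add_apply, pow_add, Finset.prod_mul_distrib]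
        simp [Pi.single_apply, pow_ite]
end

section
/- Let C be an [n,k] linear code over F_q with generator matrix rows w_1,...,w_k. Then I(C) ⊆ I_2: every binomial x^u − x^v with u,v ∈ ℕ^{n(q−1)} and ∇(u − v) ∈ C belongs to the ideal I_2 generated by the binomials x^{▲(α^j w_i)} − 1 (1 ≤ i ≤ k, 1 ≤ j ≤ q−1) together with the additive-table relations ⋃_{i=1}^n R(T_+^{(i)}). -/
open MvPolynomial Finset

/-- `I(C) ⊆ I₂`: every binomial `x^u - x^v` with `u, v ∈ ℕ^{n(q-1)}`
and `∇(u - v) ∈ C` belongs to the ideal `I₂` generated by the row binomials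
`x^{▲(αʲ wᵢ)} - 1` together with the additive-table relations; consequently
`I(C) ≤ I₂`. -/
theorem code_ideal_le_row_ideal
    (F : Type) [Field F] [Fintype F] [DecidableEq F] (n k : ℕ) (hn : 0 < n) (α : F)
    (L : {x : F // x ≠ 0} → Fin (Fintype.card F - 1))
    (hL : ∀ x : {x : F // x ≠ 0}, α ^ ((L x).1 + 1) = x.1)
    (C : Submodule F (Fin n → F)) (w : Fin k → Fin n → F)
    (hw : Submodule.span F (Set.range w) = C)
    (hdim : Module.finrank F C = k) :
    (∀ u v : Fin n × Fin (Fintype.card F - 1) → ℕ,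
      (fun i => (∑ j, u (i, j) • α ^ (j.1 + 1)) - ∑ j, v (i, j) • α ^ (j.1 + 1)) ∈ C →
      (∏ s, X s ^ u s) - (∏ s, X s ^ v s) ∈ rowIdeal F n k α L w)
    ∧ codeIdeal F n α C ≤ rowIdeal F n k α L w := by
  classical
  set I := rowIdeal F n k α L w with hI
  have hα : α ≠ 0 := by
    intro h
    have := hL ⟨1, one_ne_zero⟩
    rw [h, zero_pow (Nat.succ_ne_zero _)] at this
    exact zero_ne_one this
  have hLinj : Function.Injective L := by
    intro x y h
    apply Subtype.ext
    rw [← hL x, ← hL y, h]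
  have hLbij : Function.Bijective L := by
    rw [Fintype.bijective_iff_injective_and_card]
    refine ⟨hLinj, ?_⟩
    rw [Fintype.card_fin]
    simp [Fintype.card_subtype_compl]
  have hLα : ∀ (j : Fin (Fintype.card F - 1)) (h : α ^ (j.1 + 1) ≠ 0),
      L ⟨α ^ (j.1 + 1), h⟩ = j := by
    intro j h
    obtain ⟨x, rfl⟩ := hLbij.2 j
    congr 1
    exact Subtype.ext (hL x)
  let q := Ideal.Quotient.mk I
  have hadd : ∀ p ∈ addRel F n α, p ∈ I := fun p hp =>
    Ideal.subset_span (Or.inr hp)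
  let m : Fin n → F → (MvPolynomial (Fin n × Fin (Fintype.card F - 1)) (ZMod 2) ⧸ I) :=
    fun i a => if h : a ≠ 0 then q (X (i, L ⟨a, h⟩)) else 1
  have m0 : ∀ i, m i 0 = 1 := fun i => by simp [m]
  have madd : ∀ i a b, m i (a + b) = m i a * m i b := by
    intro i a b
    by_cases ha : a = 0
    · subst ha; rw [zero_add, m0, one_mul]
    by_cases hb : b = 0
    · subst hb; rw [add_zero, m0, mul_one]
    have ea : m i a = q (X (i, L ⟨a, ha⟩)) := dif_pos ha
    have eb : m i b = q (X (i, L ⟨b, hb⟩)) := dif_pos hb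
    by_cases hab : a + b = 0
    · rw [hab, m0, ea, eb, ← map_mul, ← map_one q, eq_comm]
      refine Ideal.Quotient.eq.2 (hadd _ (Or.inr ⟨i, L ⟨a, ha⟩, L ⟨b, hb⟩, ?_, rfl⟩))
      rw [hL, hL]; exact hab
    · have eab : m i (a + b) = q (X (i, L ⟨a + b, hab⟩)) := dif_pos hab
      rw [eab, ea, eb, ← map_mul, eq_comm]
      refine Ideal.Quotient.eq.2
        (hadd _ (Or.inl ⟨i, L ⟨a, ha⟩, L ⟨b, hb⟩, L ⟨a + b, hab⟩, ?_, rfl⟩))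
      rw [hL, hL, hL]
  let M : Fin n → Multiplicative F →*
      (MvPolynomial (Fin n × Fin (Fintype.card F - 1)) (ZMod 2) ⧸ I) := fun i =>
    { toFun := fun a => m i a.toAdd
      map_one' := m0 i
      map_mul' := fun a b => madd i a.toAdd b.toAdd }
  have hM : ∀ i a, M i (Multiplicative.ofAdd a) = m i a := fun i a => rfl
  let ψ : (Fin n → F) → (MvPolynomial (Fin n × Fin (Fintype.card F - 1)) (ZMod 2) ⧸ I) :=
    fun a => ∏ i, m i (a i)
  have ψadd : ∀ a b, ψ (a + b) = ψ a * ψ b := by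
    intro a b
    simp only [ψ, Pi.add_apply, madd, Finset.prod_mul_distrib]
  have ψ0 : ψ 0 = 1 := by simp [ψ, m0]
  have ψxup : ∀ a, q (xup F n L a) = ψ a := by
    intro a
    simp only [xup, ψ, m, map_prod]
    refine Finset.prod_congr rfl fun i _ => ?_
    split_ifs <;> simp
  have ψC : ∀ a ∈ C, ∀ c : F, ψ (c • a) = 1 := by
    intro a ha
    rw [← hw] at ha
    induction ha using Submodule.span_induction with
    | mem x hx =>
      obtain ⟨i, rfl⟩ := hx
      intro c
      by_cases hc : c = 0
      · rw [hc, zero_smul, ψ0]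
      · rw [← ψxup, ← map_one q]
        refine Ideal.Quotient.eq.2 (Ideal.subset_span (Or.inl ⟨i, L ⟨c, hc⟩, ?_⟩))
        rw [hL]
    | zero => intro c; rw [smul_zero, ψ0]
    | add x y _ _ hx hy => intro c; rw [smul_add, ψadd, hx, hy, one_mul]
    | smul d x _ hx => intro c; rw [smul_smul, hx]
  have ψmon : ∀ u : Fin n × Fin (Fintype.card F - 1) → ℕ,
      q (∏ s, X s ^ u s) = ψ (fun i => ∑ j, u (i, j) • α ^ (j.1 + 1)) := by
    intro u
    rw [map_prod, Fintype.prod_prod_type]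
    refine Finset.prod_congr rfl fun i _ => ?_
    rw [← hM, ofAdd_sum, map_prod]
    refine Finset.prod_congr rfl fun j _ => ?_
    have h : α ^ (j.1 + 1) ≠ 0 := pow_ne_zero _ hα
    have e : m i (α ^ (j.1 + 1)) = q (X (i, L ⟨α ^ (j.1 + 1), h⟩)) := dif_pos h
    rw [ofAdd_nsmul, map_pow, map_pow, hM, e, hLα]
  have main : ∀ u v : Fin n × Fin (Fintype.card F - 1) → ℕ,
      (fun i => (∑ j, u (i, j) • α ^ (j.1 + 1)) - ∑ j, v (i, j) • α ^ (j.1 + 1)) ∈ C →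
      (∏ s, X s ^ u s) - (∏ s, X s ^ v s) ∈ I := by
    intro u v h
    refine Ideal.Quotient.eq.1 ?_
    change q _ = q _
    rw [ψmon, ψmon]
    have h1 := ψC _ h 1
    rw [one_smul] at h1
    rw [← one_mul (ψ fun i => ∑ j, v (i, j) • α ^ (j.1 + 1)), ← h1, ← ψadd]
    congr 1
    funext i
    simp
  refine ⟨main, ?_⟩
  refine Ideal.span_le.2 ?_
  rintro p ⟨u, v, h, rfl⟩
  exact main u v h
end

section
/- Every monomial of F_2[x_{ij} : 1 ≤ i ≤ n, 1 ≤ j ≤ q−1] is congruent modulo the relations ideal to its squarefree normal form with at most one variable per coordinate block: for every exponent vector c ∈ ℕ^{n(q−1)}, the binomial x^c − x^{▲(∇c)} belongs to J = ⟨⋃_{i=1}^n R(T_+^{(i)})⟩. In particular every monomial is congruent modulo J to a monomial of total degree at most n. -/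
open MvPolynomial Finset

/-- single block normal form -/
noncomputable def blk (F : Type) [Field F] [Fintype F] [DecidableEq F] (n : ℕ)
    (L : {x : F // x ≠ 0} → Fin (Fintype.card F - 1)) (i : Fin n) (a : F) :
    MvPolynomial (Fin n × Fin (Fintype.card F - 1)) (ZMod 2) :=
  if h : a ≠ 0 then X (i, L ⟨a, h⟩) else 1

theorem blk_add (F : Type) [Field F] [Fintype F] [DecidableEq F] (n : ℕ) (α : F)
    (L : {x : F // x ≠ 0} → Fin (Fintype.card F - 1))
    (hL : ∀ x : {x : F // x ≠ 0}, α ^ ((L x).1 + 1) = x.1) (i : Fin n) (a b : F) :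
    blk F n L i a * blk F n L i b - blk F n L i (a + b) ∈ Ideal.span (addRel F n α) := by
  by_cases ha : a = 0
  · subst ha; simp [blk]
  by_cases hb : b = 0
  · subst hb; simp [blk]
  apply Ideal.subset_span
  by_cases hab : a + b = 0
  · right
    refine ⟨i, L ⟨a, ha⟩, L ⟨b, hb⟩, ?_, ?_⟩
    · rw [hL, hL]; exact hab
    · simp [blk, ha, hb, hab]
  · left
    refine ⟨i, L ⟨a, ha⟩, L ⟨b, hb⟩, L ⟨a + b, hab⟩, ?_, ?_⟩
    · rw [hL, hL, hL]
    · simp [blk, ha, hb, hab]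

theorem blk_pow (F : Type) [Field F] [Fintype F] [DecidableEq F] (n : ℕ) (α : F)
    (L : {x : F // x ≠ 0} → Fin (Fintype.card F - 1))
    (hL : ∀ x : {x : F // x ≠ 0}, α ^ ((L x).1 + 1) = x.1) (i : Fin n)
    (j : Fin (Fintype.card F - 1)) :
    blk F n L i (α ^ (j.1 + 1)) = X (i, j) := by
  have hinj : Function.Injective L := by
    intro x y h
    apply Subtype.ext
    rw [← hL x, ← hL y, h]
  have hbij : Function.Bijective L := by
    rw [Fintype.bijective_iff_injective_and_card]
    refine ⟨hinj, ?_⟩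
    simp [Fintype.card_subtype_compl]
  obtain ⟨x, rfl⟩ := hbij.2 j
  rw [hL]
  simp [blk, x.2]

/-- Every monomial of `F₂[x_{ij}]` is congruent modulo the relations ideal
to its squarefree normal form with at most one variable per coordinate block: for every
exponent vector `c ∈ ℕ^{n(q-1)}`, the binomial `x^c − x^{▲(∇c)}` belongs to
`J = ⟨⋃ᵢ R(T₊⁽ⁱ⁾)⟩`.  In particular every monomial is congruent modulo `J` to a
monomial of total degree at most `n`. -/
theorem monomial_sub_normalForm_mem
    (F : Type) [Field F] [Fintype F] [DecidableEq F] (n : ℕ) (hn : 0 < n) (α : F)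
    (L : {x : F // x ≠ 0} → Fin (Fintype.card F - 1))
    (hL : ∀ x : {x : F // x ≠ 0}, α ^ ((L x).1 + 1) = x.1)
    (c : Fin n × Fin (Fintype.card F - 1) → ℕ) :
    ((∏ s, X s ^ c s) - xup F n L (fun i => ∑ j, c (i, j) • α ^ (j.1 + 1))
        ∈ Ideal.span (addRel F n α))
    ∧ (xup F n L (fun i => ∑ j, c (i, j) • α ^ (j.1 + 1))).totalDegree ≤ n := by
  constructor
  · rw [← Ideal.Quotient.eq]
    set J := Ideal.span (addRel F n α) with hJ
    let m : Fin n → Multiplicative F →*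
        (MvPolynomial (Fin n × Fin (Fintype.card F - 1)) (ZMod 2) ⧸ J) := fun i =>
      { toFun := fun a => Ideal.Quotient.mk J (blk F n L i a.toAdd)
        map_one' := by simp [blk]
        map_mul' := by
          intro a b
          rw [← map_mul, toAdd_mul]
          exact (Ideal.Quotient.eq.2 (blk_add F n α L hL i a.toAdd b.toAdd)).symm }
    have hm : ∀ i a, m i (Multiplicative.ofAdd a) = Ideal.Quotient.mk J (blk F n L i a) :=
      fun _ _ => rfl
    have hx : xup F n L (fun i => ∑ j, c (i, j) • α ^ (j.1 + 1)) =
      ∏ i, blk F n L i (∑ j, c (i, j) • α ^ (j.1 + 1)) := rfl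
    rw [hx, map_prod, map_prod, Fintype.prod_prod_type]
    refine Finset.prod_congr rfl fun i _ => ?_
    rw [← hm, ofAdd_sum, map_prod]
    refine Finset.prod_congr rfl fun j _ => ?_
    rw [ofAdd_nsmul, map_pow, map_pow, hm, blk_pow F n α L hL]
  · refine (totalDegree_finsetProd _ _).trans ?_
    refine (Finset.sum_le_card_nsmul _ _ 1 fun i _ => ?_).trans (by simp)
    split_ifs
    · simp
    · simp
end

section
/- Let C be an [n,k] linear code over F_q with generator matrix rows w_1,...,w_k. For every codeword c ∈ C, the binomial x^{▲c} − 1 belongs to the ideal I_2 generated by the binomials x^{▲(α^j w_i)} − 1 (1 ≤ i ≤ k, 1 ≤ j ≤ q−1) together with the additive-table relations ⋃_{i=1}^n R(T_+^{(i)}). -/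
open MvPolynomial Finset

theorem xup_add_aux (F : Type) [Field F] [Fintype F] [DecidableEq F] (n k : ℕ) (α : F)
    (L : {x : F // x ≠ 0} → Fin (Fintype.card F - 1))
    (hL : ∀ x : {x : F // x ≠ 0}, α ^ ((L x).1 + 1) = x.1)
    (w : Fin k → Fin n → F) (a b : Fin n → F) :
    Ideal.Quotient.mk (rowIdeal F n k α L w) (xup F n L (a + b)) =
      Ideal.Quotient.mk (rowIdeal F n k α L w) (xup F n L a) *
      Ideal.Quotient.mk (rowIdeal F n k α L w) (xup F n L b) := by
  unfold xup
  rw [map_prod, map_prod, map_prod, ← Finset.prod_mul_distrib]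
  refine Finset.prod_congr rfl fun i _ => ?_
  rw [← map_mul]
  by_cases ha : a i = 0
  · simp [ha]
  by_cases hb : b i = 0
  · simp [hb]
  symm
  rw [Ideal.Quotient.eq]
  apply Ideal.subset_span
  right
  by_cases hab : a i + b i = 0
  · right
    exact ⟨i, L ⟨a i, ha⟩, L ⟨b i, hb⟩, by rw [hL, hL]; exact hab, by simp [ha, hb, hab]⟩
  · left
    exact ⟨i, L ⟨a i, ha⟩, L ⟨b i, hb⟩, L ⟨a i + b i, hab⟩, by rw [hL, hL, hL],
      by simp [ha, hb, hab]⟩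

/-- Let `C` be an `[n,k]` linear code over `F` with generator matrix rows
`w₁, …, w_k`.  For every codeword `c ∈ C`, the binomial `x^{▲c} − 1` belongs to the ideal
`I₂` generated by the row binomials `x^{▲(αʲ wᵢ)} − 1` (for `1 ≤ i ≤ k`, `1 ≤ j ≤ q-1`)
together with the additive-table relations `⋃ᵢ R(T₊⁽ⁱ⁾)`. -/
theorem codeword_binomial_mem_row_ideal
    (F : Type) [Field F] [Fintype F] [DecidableEq F] (n k : ℕ) (hn : 0 < n) (α : F)
    (L : {x : F // x ≠ 0} → Fin (Fintype.card F - 1))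
    (hL : ∀ x : {x : F // x ≠ 0}, α ^ ((L x).1 + 1) = x.1)
    (C : Submodule F (Fin n → F)) (w : Fin k → Fin n → F)
    (hw : Submodule.span F (Set.range w) = C)
    (hdim : Module.finrank F C = k) :
    ∀ c ∈ C, xup F n L c - 1 ∈ rowIdeal F n k α L w := by
  subst hw
  have key : ∀ c ∈ Submodule.span F (Set.range w), ∀ t : F,
      Ideal.Quotient.mk (rowIdeal F n k α L w) (xup F n L (t • c)) = 1 := by
    have h0 : xup F n L (0 : Fin n → F) = 1 := by simp [xup]
    intro c hc
    induction hc using Submodule.span_induction with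
    | mem x hx =>
      obtain ⟨i, rfl⟩ := hx
      intro t
      by_cases ht : t = 0
      · rw [ht, zero_smul, h0, map_one]
      · rw [← map_one (Ideal.Quotient.mk (rowIdeal F n k α L w)), Ideal.Quotient.eq]
        apply Ideal.subset_span
        left
        exact ⟨i, L ⟨t, ht⟩, by rw [hL]⟩
    | zero => intro t; rw [smul_zero, h0, map_one]
    | add x y _ _ hx hy =>
      intro t
      rw [smul_add, xup_add_aux F n k α L hL, hx, hy, one_mul]
    | smul s x _ hx => intro t; rw [smul_smul]; exact hx _
  intro c hc
  rw [← Ideal.Quotient.eq, map_one]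
  simpa using key c hc 1
end

section
/- The ideal generated by the additive-table relations of all blocks equals the full binomial ideal of the crossing map: ⟨⋃_{i=1}^n R(T_+^{(i)})⟩ = ⟨x^u − x^v : u, v ∈ ℕ^{n(q−1)}, ∇u = ∇v⟩ as ideals of F_2[x_{ij} : 1 ≤ i ≤ n, 1 ≤ j ≤ q−1]. (This is the case C = {0} of the identification of the code ideal with the ideal generated by row binomials and relations.) -/
open MvPolynomial Finset

theorem aux_pow_ne (F : Type) [Field F] [Fintype F] (α : F)
    (hprim : ∀ x : F, x ≠ 0 → ∃ j : Fin (Fintype.card F - 1), α ^ (j.1 + 1) = x) (k : ℕ) :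
    α ^ k ≠ 0 := by
  obtain ⟨j, hj⟩ := hprim 1 one_ne_zero
  apply pow_ne_zero
  rintro rfl
  simp at hj

theorem aux_inj (F : Type) [Field F] [Fintype F] (α : F)
    (hprim : ∀ x : F, x ≠ 0 → ∃ j : Fin (Fintype.card F - 1), α ^ (j.1 + 1) = x) :
    Function.Injective (fun j : Fin (Fintype.card F - 1) => α ^ (j.1 + 1)) := by
  classical
  let g : Fin (Fintype.card F - 1) → {x : F // x ≠ 0} :=
    fun j => ⟨α ^ (j.1 + 1), aux_pow_ne F α hprim _⟩
  have hs : Function.Surjective g := by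
    rintro ⟨x, hx⟩
    obtain ⟨j, hj⟩ := hprim x hx
    exact ⟨j, Subtype.ext hj⟩
  have hc : Fintype.card (Fin (Fintype.card F - 1)) = Fintype.card {x : F // x ≠ 0} := by
    rw [Fintype.card_subtype_compl]
    simp
  have hb := (Fintype.bijective_iff_surjective_and_card g).2 ⟨hs, hc⟩
  intro a b hab
  exact hb.1 (Subtype.ext hab)

theorem aux_prod_single {σ : Type} [Fintype σ] [DecidableEq σ] (a : σ) :
    (∏ s, (X s : MvPolynomial σ (ZMod 2)) ^ (Pi.single a 1 : σ → ℕ) s) = X a := by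
  rw [Finset.prod_eq_single a]
  · simp
  · intro b _ hb
    simp [Pi.single_eq_of_ne hb]
  · simp

theorem aux_prod_add {σ : Type} [Fintype σ] (u v : σ → ℕ) :
    (∏ s, (X s : MvPolynomial σ (ZMod 2)) ^ (u + v) s) =
      (∏ s, X s ^ u s) * ∏ s, X s ^ v s := by
  simp [pow_add, Finset.prod_mul_distrib]

theorem aux_nabla_single {ι κ M : Type} [Fintype κ] [DecidableEq ι] [DecidableEq κ]
    [AddCommMonoid M] (f : κ → M) (i k : ι) (a : κ) :
    (∑ j, (Pi.single (i, a) 1 : ι × κ → ℕ) (k, j) • f j) = if k = i then f a else 0 := by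
  split_ifs with h
  · subst h
    rw [Finset.sum_eq_single a]
    · simp
    · intro b _ hb
      rw [Pi.single_eq_of_ne (by simpa using hb), zero_smul]
    · simp
  · apply Finset.sum_eq_zero
    intro j _
    rw [Pi.single_eq_of_ne (by simp [h]), zero_smul]

theorem aux_hom {F A σ : Type} [Field F] [CommRing A] [Fintype σ] (e : σ → F) (y : σ → A)
    (he : Function.Injective e) (h0 : ∀ j, e j ≠ 0) (hs : ∀ x, x ≠ 0 → ∃ j, e j = x)
    (h1 : ∀ u v w, e u + e v = e w → y u * y v = y w)
    (h2 : ∀ u v, e u + e v = 0 → y u * y v = 1) :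
    ∃ f : Multiplicative F →* A, ∀ j, f (Multiplicative.ofAdd (e j)) = y j := by
  classical
  let f : F → A := fun x => if h : x ≠ 0 then y (hs x h).choose else 1
  have hf : ∀ j, f (e j) = y j := by
    intro j
    have : f (e j) = y (hs (e j) (h0 j)).choose := dif_pos (h0 j)
    rw [this, he (hs (e j) (h0 j)).choose_spec]
  have hf0 : f 0 = 1 := by simp [f]
  have hadd : ∀ a b, f (a + b) = f a * f b := by
    intro a b
    by_cases ha : a = 0
    · simp [ha, hf0]
    by_cases hb : b = 0
    · simp [hb, hf0]
    obtain ⟨u, rfl⟩ := hs a ha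
    obtain ⟨v, rfl⟩ := hs b hb
    rw [hf, hf]
    by_cases hab : e u + e v = 0
    · rw [hab, hf0, h2 u v hab]
    · obtain ⟨w, hw⟩ := hs _ hab
      rw [← hw, hf, h1 u v w hw.symm]
  exact ⟨{ toFun := fun x => f x.toAdd, map_one' := hf0, map_mul' := fun a b => hadd _ _ }, hf⟩

/-- The ideal generated by the additive-table relations of all blocks
equals the full binomial ideal of the crossing map:
`⟨⋃ᵢ R(T₊⁽ⁱ⁾)⟩ = ⟨x^u − x^v : u, v ∈ ℕ^{n(q-1)}, ∇u = ∇v⟩`,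
where `∇` maps an exponent vector `(c_{ij})` to the vector of `F^n` whose `i`-th
coordinate is `∑_j c_{ij} α^j`.  (This is the case `C = {0}` of the identification of the
code ideal with the ideal generated by row binomials and relations.) -/
theorem addRel_span_eq_lattice_ideal
    (F : Type) [Field F] [Fintype F] (n : ℕ) (hn : 0 < n) (α : F)
    (hprim : ∀ x : F, x ≠ 0 → ∃ j : Fin (Fintype.card F - 1), α ^ (j.1 + 1) = x) :
    Ideal.span (addRel F n α) =
      Ideal.span {p | ∃ u v : Fin n × Fin (Fintype.card F - 1) → ℕ,
        (fun i => ∑ j, u (i, j) • α ^ (j.1 + 1)) =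
          (fun i => ∑ j, v (i, j) • α ^ (j.1 + 1)) ∧
        p = (∏ s, X s ^ u s) - ∏ s, X s ^ v s} := by
  classical
  have hn0 := aux_pow_ne F α hprim
  apply le_antisymm
  · rw [Ideal.span_le]
    rintro p (⟨i, u, v, w, h, rfl⟩ | ⟨i, u, v, h, rfl⟩)
    · apply Ideal.subset_span
      refine ⟨Pi.single (i, u) 1 + Pi.single (i, v) 1, Pi.single (i, w) 1, ?_, ?_⟩
      · funext k
        simp only [Pi.add_apply, add_smul, Finset.sum_add_distrib]
        rw [aux_nabla_single (fun j : Fin (Fintype.card F - 1) => α ^ (j.1 + 1)),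
          aux_nabla_single (fun j : Fin (Fintype.card F - 1) => α ^ (j.1 + 1)),
          aux_nabla_single (fun j : Fin (Fintype.card F - 1) => α ^ (j.1 + 1))]
        split_ifs
        · exact h
        · simp
      · rw [aux_prod_add, aux_prod_single, aux_prod_single, aux_prod_single]
    · apply Ideal.subset_span
      refine ⟨Pi.single (i, u) 1 + Pi.single (i, v) 1, 0, ?_, ?_⟩
      · funext k
        simp only [Pi.add_apply, add_smul, Finset.sum_add_distrib]
        rw [aux_nabla_single (fun j : Fin (Fintype.card F - 1) => α ^ (j.1 + 1)),
          aux_nabla_single (fun j : Fin (Fintype.card F - 1) => α ^ (j.1 + 1))]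
        split_ifs
        · simpa using h
        · simp
      · rw [aux_prod_add, aux_prod_single, aux_prod_single]
        simp
  · rw [Ideal.span_le]
    rintro p ⟨u, v, h, rfl⟩
    have key : ∀ i : Fin n, ∃ f : Multiplicative F →*
        (MvPolynomial (Fin n × Fin (Fintype.card F - 1)) (ZMod 2) ⧸ Ideal.span (addRel F n α)),
        ∀ j : Fin (Fintype.card F - 1), f (Multiplicative.ofAdd (α ^ (j.1 + 1))) =
          Ideal.Quotient.mk (Ideal.span (addRel F n α)) (X (i, j)) := by
      intro i
      refine aux_hom (fun j : Fin (Fintype.card F - 1) => α ^ (j.1 + 1))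
        (fun j => Ideal.Quotient.mk (Ideal.span (addRel F n α)) (X (i, j)))
        (aux_inj F α hprim) (fun j => hn0 _) hprim ?_ ?_
      · intro a b c habc
        rw [← map_mul, Ideal.Quotient.eq]
        exact Ideal.subset_span (Or.inl ⟨i, a, b, c, habc, rfl⟩)
      · intro a b hab
        rw [← map_mul, ← map_one (Ideal.Quotient.mk (Ideal.span (addRel F n α))),
          Ideal.Quotient.eq]
        exact Ideal.subset_span (Or.inr ⟨i, a, b, hab, rfl⟩)
    choose f hf using key
    have main : ∀ u : Fin n × Fin (Fintype.card F - 1) → ℕ,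
        Ideal.Quotient.mk (Ideal.span (addRel F n α)) (∏ s, X s ^ u s) =
          ∏ i, f i (Multiplicative.ofAdd (∑ j, u (i, j) • α ^ (j.1 + 1))) := by
      intro u
      rw [map_prod, Fintype.prod_prod_type]
      refine Finset.prod_congr rfl fun i _ => ?_
      rw [ofAdd_sum, map_prod]
      refine Finset.prod_congr rfl fun j _ => ?_
      rw [ofAdd_nsmul, map_pow, map_pow, hf]
    rw [SetLike.mem_coe, ← Ideal.Quotient.eq, main, main]
    refine Finset.prod_congr rfl fun i _ => ?_
    rw [congrFun h i]
end

section
/- Let φ : F_2[x_{ij} : 1 ≤ i ≤ n, 1 ≤ j ≤ q−1] → F_2[(F_q^n, +)] be the F_2-algebra homomorphism to the group algebra of the additive group F_q^n sending the variable x_{ij} to the group-algebra basis element corresponding to the vector α^j · e_i ∈ F_q^n (e_i the i-th standard basis vector of F_q^n). Then the kernel of φ is exactly the ideal J = ⟨⋃_{i=1}^n R(T_+^{(i)})⟩ generated by the additive-table relations. -/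
open MvPolynomial Finset

/-- Let `φ : F₂[x_{ij}] → F₂[(F^n, +)]` be the `F₂`-algebra homomorphism
to the group algebra of the additive group `F^n` sending the variable `x_{ij}` to the
group-algebra basis element corresponding to the vector `αʲ · eᵢ ∈ F^n` (`eᵢ` the `i`-th
standard basis vector).  Then the kernel of `φ` is exactly the ideal
`J = ⟨⋃ᵢ R(T₊⁽ⁱ⁾)⟩` generated by the additive-table relations. -/
theorem ker_aeval_groupAlgebra_eq_addRel_span
    (F : Type) [Field F] [Fintype F] [DecidableEq F] (n : ℕ) (hn : 0 < n) (α : F)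
    (hprim : ∀ x : F, x ≠ 0 → ∃ j : Fin (Fintype.card F - 1), α ^ (j.1 + 1) = x) :
    RingHom.ker (MvPolynomial.aeval
        (fun s : Fin n × Fin (Fintype.card F - 1) =>
          (AddMonoidAlgebra.single (Pi.single s.1 (α ^ (s.2.1 + 1))) 1 :
            AddMonoidAlgebra (ZMod 2) (Fin n → F)))) =
      Ideal.span (addRel F n α) := by
  classical
  have hα : α ≠ 0 := by
    rintro rfl
    obtain ⟨j, hj⟩ := hprim 1 one_ne_zero
    simp at hj
  have hinj : ∀ j k : Fin (Fintype.card F - 1), α ^ (j.1 + 1) = α ^ (k.1 + 1) → j = k := by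
    let f : Fin (Fintype.card F - 1) → {x : F // x ≠ 0} :=
      fun j => ⟨α ^ (j.1 + 1), pow_ne_zero _ hα⟩
    have hs : Function.Surjective f := by
      rintro ⟨x, hx⟩
      obtain ⟨j, hj⟩ := hprim x hx
      exact ⟨j, Subtype.ext hj⟩
    have hb : Function.Bijective f := by
      rw [Fintype.bijective_iff_surjective_and_card]
      refine ⟨hs, ?_⟩
      rw [Fintype.card_fin, Fintype.card_subtype_compl, Fintype.card_subtype_eq]
    intro j k h
    exact hb.1 (Subtype.ext h)
  choose lg hlg using hprim
  let J := Ideal.span (addRel F n α)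
  let y : Fin n → F → (MvPolynomial (Fin n × Fin (Fintype.card F - 1)) (ZMod 2) ⧸ J) :=
    fun i a => if h : a = 0 then 1 else Ideal.Quotient.mk J (X (i, lg a h))
  have y0 : ∀ i, y i 0 = 1 := fun i => by simp [y]
  have ypow : ∀ i (j : Fin (Fintype.card F - 1)),
      y i (α ^ (j.1 + 1)) = Ideal.Quotient.mk J (X (i, j)) := by
    intro i j
    have h : α ^ (j.1 + 1) ≠ 0 := pow_ne_zero _ hα
    simp only [y, dif_neg h]
    rw [hinj _ _ (hlg _ h)]
  have ymul : ∀ i a b, y i (a + b) = y i a * y i b := by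
    intro i a b
    by_cases ha : a = 0
    · subst ha; simp [y0]
    by_cases hb : b = 0
    · subst hb; simp [y0]
    rw [← hlg a ha, ← hlg b hb]
    generalize lg a ha = u
    generalize lg b hb = v
    rw [ypow, ypow, ← map_mul]
    by_cases hc : α ^ (u.1 + 1) + α ^ (v.1 + 1) = 0
    · rw [hc, y0, ← map_one (Ideal.Quotient.mk J), eq_comm, Ideal.Quotient.eq]
      exact Ideal.subset_span (Or.inr ⟨i, u, v, hc, rfl⟩)
    · have hw := hlg _ hc
      rw [← hw, ypow, eq_comm, Ideal.Quotient.eq]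
      exact Ideal.subset_span (Or.inl ⟨i, u, v, _, hw.symm, rfl⟩)
  let g : Multiplicative (Fin n → F) →*
      (MvPolynomial (Fin n × Fin (Fintype.card F - 1)) (ZMod 2) ⧸ J) :=
    { toFun := fun v => ∏ i, y i (v.toAdd i)
      map_one' := by simp [y0]
      map_mul' := fun a b => by simp [ymul, Finset.prod_mul_distrib] }
  have gs : ∀ i a, g (Multiplicative.ofAdd (Pi.single i a)) = y i a := by
    intro i a
    change ∏ k, y k ((Pi.single i a : Fin n → F) k) = y i a
    rw [Finset.prod_eq_single i]
    · simp
    · intro k _ hk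
      rw [Pi.single_eq_of_ne hk, y0]
    · simp
  let ψ := AddMonoidAlgebra.lift (ZMod 2)
    (MvPolynomial (Fin n × Fin (Fintype.card F - 1)) (ZMod 2) ⧸ J) (Fin n → F) g
  apply le_antisymm
  · intro p hp
    rw [RingHom.mem_ker] at hp
    have hcomp : ψ.comp (MvPolynomial.aeval
        (fun s : Fin n × Fin (Fintype.card F - 1) =>
          (AddMonoidAlgebra.single (Pi.single s.1 (α ^ (s.2.1 + 1))) 1 :
            AddMonoidAlgebra (ZMod 2) (Fin n → F)))) = Ideal.Quotient.mkₐ (ZMod 2) J := by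
      apply MvPolynomial.algHom_ext
      rintro ⟨i, j⟩
      simp only [AlgHom.comp_apply, MvPolynomial.aeval_X, ψ, AddMonoidAlgebra.lift_single,
        one_smul, gs, ypow, Ideal.Quotient.mkₐ_eq_mk]
    have h2 := DFunLike.congr_fun hcomp p
    rw [AlgHom.comp_apply, hp, map_zero] at h2
    exact Ideal.Quotient.eq_zero_iff_mem.mp h2.symm
  · rw [Ideal.span_le]
    rintro p (⟨i, u, v, w, h, rfl⟩ | ⟨i, u, v, h, rfl⟩)
    · simp only [SetLike.mem_coe, RingHom.mem_ker, map_sub, map_mul, MvPolynomial.aeval_X,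
        AddMonoidAlgebra.single_mul_single, ← Pi.single_add, h, mul_one, sub_self]
    · simp only [SetLike.mem_coe, RingHom.mem_ker, map_sub, map_mul, MvPolynomial.aeval_X,
        AddMonoidAlgebra.single_mul_single, ← Pi.single_add, h, mul_one, map_one, Pi.single_zero]
      rw [AddMonoidAlgebra.one_def, sub_self]
end

section
/- For any two vectors a, b ∈ F_q^n, the difference x^{▲a} − x^{▲b} is congruent to (x^{▲(a−b)} − 1)·x^{▲b} modulo the relations ideal: x^{▲a} − x^{▲b} − (x^{▲(a−b)} − 1)·x^{▲b} ∈ J = ⟨⋃_{i=1}^n R(T_+^{(i)})⟩. Consequently, if x^{▲(a−b)} − 1 lies in an ideal I containing J, then x^{▲a} − x^{▲b} ∈ I. -/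
open MvPolynomial Finset

theorem xup_mul_mk (F : Type) [Field F] [Fintype F] [DecidableEq F] (n : ℕ) (α : F)
    (L : {x : F // x ≠ 0} → Fin (Fintype.card F - 1))
    (hL : ∀ x : {x : F // x ≠ 0}, α ^ ((L x).1 + 1) = x.1)
    (a b : Fin n → F) :
    Ideal.Quotient.mk (Ideal.span (addRel F n α)) (xup F n L (a - b) * xup F n L b)
      = Ideal.Quotient.mk (Ideal.span (addRel F n α)) (xup F n L a) := by
  unfold xup
  rw [← Finset.prod_mul_distrib, map_prod, map_prod]
  refine Finset.prod_congr rfl fun i _ => ?_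
  rw [Ideal.Quotient.eq]
  by_cases hb : b i = 0
  · by_cases ha : a i = 0 <;> simp [ha, hb]
  by_cases hc : (a - b) i = 0
  · have hab : a i = b i := sub_eq_zero.mp hc
    simp [hab]
  by_cases ha : a i = 0
  · rw [dif_pos hc, dif_pos hb, dif_neg (not_not.mpr ha)]
    refine Ideal.subset_span (Or.inr ⟨i, _, _, ?_, rfl⟩)
    rw [hL, hL]
    simp [ha]
  · rw [dif_pos hc, dif_pos hb, dif_pos ha]
    refine Ideal.subset_span (Or.inl ⟨i, _, _, _, ?_, rfl⟩)
    rw [hL, hL, hL]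
    simp

/-- For any two vectors `a, b ∈ F^n`, the difference `x^{▲a} − x^{▲b}`
is congruent to `(x^{▲(a−b)} − 1) · x^{▲b}` modulo the relations ideal
`J = ⟨⋃ᵢ R(T₊⁽ⁱ⁾)⟩`.  Consequently, if `x^{▲(a−b)} − 1` lies in an ideal `I`
containing `J`, then `x^{▲a} − x^{▲b} ∈ I`. -/
theorem xup_sub_xup_congr
    (F : Type) [Field F] [Fintype F] [DecidableEq F] (n : ℕ) (hn : 0 < n) (α : F)
    (L : {x : F // x ≠ 0} → Fin (Fintype.card F - 1))
    (hL : ∀ x : {x : F // x ≠ 0}, α ^ ((L x).1 + 1) = x.1)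
    (a b : Fin n → F) :
    (xup F n L a - xup F n L b - (xup F n L (a - b) - 1) * xup F n L b
        ∈ Ideal.span (addRel F n α))
    ∧ ∀ I : Ideal (MvPolynomial (Fin n × Fin (Fintype.card F - 1)) (ZMod 2)),
        Ideal.span (addRel F n α) ≤ I → xup F n L (a - b) - 1 ∈ I →
        xup F n L a - xup F n L b ∈ I := by
  have key : xup F n L a - xup F n L b - (xup F n L (a - b) - 1) * xup F n L b
        ∈ Ideal.span (addRel F n α) := by
    have h := Ideal.Quotient.eq.mp (xup_mul_mk F n α L hL a b).symm
    convert h using 1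
    ring
  refine ⟨key, fun I hI h => ?_⟩
  exact (Submodule.sub_mem_iff_left I (I.mul_mem_right _ h)).mp (hI key)
end
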